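/- Every 2-connected graph G on n vertices with minimum degree δ ≥ 2 contains a cycle of length at least min{n, 2δ} (Dirac's theorem on long cycles). -/

import Mathlib

/-!
Let `P` be a longest path, with ends `x` and `y`, so that all neighbours of `x` and `y` lie on `P`.
If `x` and `y` are adjacent, there is a cycle through all of `P = P₀ … Pₖ`. Otherwise suppose first
that some neighbour `Pⱼ` of `y` precedes some neighbour `Pᵢ₊₁` of `x`, with `i - j ≥ 0` minimal. The
cycle `Pⱼ … P₀ Pᵢ₊₁ … Pₖ Pⱼ` has `(j + 1) + (k - i)` vertices. It spans `P` if `i = j`; if `j < i`,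
then by minimality the indices of the neighbours of `y` and of the predecessors of the neighbours of
`x` are all distinct and outside the open interval `(j, i)`, so there are at most
`(j + 1) + (k - i)` of them.

If, on the other hand, all neighbours of `x` precede all neighbours of `y`, cut `P` at the last
neighbour `s` of `x` and at the first neighbour `t` of `y` into `L`, `M` and `R`. Since there is no
cut vertex, augmenting along `M` as in the proof of Menger's theorem gives two disjoint paths from
`L` to `R`, one of them starting at `s` and one ending at `t`. Rotations inside `L` and `R` close
them up to a cycle through the closed neighbourhoods of `x` and `y`, which share at most one vertex.

Finally, a cycle missing some vertex extends to a path with as many edges as the cycle, so by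
maximality of `P` a cycle with at least `|P|` vertices is spanning.
-/

namespace DiracLongCycle

open SimpleGraph

variable {V : Type*} {G : SimpleGraph V} {A B C D : Set V} {a b c d s t u v w w' x y z : V}

theorem isPath_append {p : G.Walk u v} {q : G.Walk v w} (hp : p.IsPath) (hq : q.IsPath)
    (h : ∀ z ∈ p.support, z ∈ q.support → z = v) : (p.append q).IsPath := by
  have hq' := hq.support_nodup
  rw [← Walk.cons_tail_support, List.nodup_cons] at hq'
  rw [Walk.isPath_def, Walk.support_append, List.nodup_append']
  refine ⟨hp.support_nodup, hq'.2, fun z hzp hzq ↦ hq'.1 ?_⟩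
  exact h z hzp (List.mem_of_mem_tail hzq) ▸ hzq

theorem eq_of_mem_support_append {p : G.Walk u v} {q : G.Walk v w} (h : (p.append q).IsPath)
    (hp : z ∈ p.support) (hq : z ∈ q.support) : z = v := by
  by_contra hz
  exact h.ne_of_mem_support_of_append hz hp hq rfl

theorem isCycle_cons_of_two_le_length {p : G.Walk u v} (hp : p.IsPath) (h : G.Adj v u)
    (hlen : 2 ≤ p.length) : (p.cons h).IsCycle := by
  refine (Walk.cons_isCycle_iff p h).2 ⟨hp, fun he ↦ ?_⟩
  rw [Sym2.eq_swap] at he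
  have := hp.length_eq_one_of_mem_edges he
  omega

theorem exists_append_first_mem (p : G.Walk u v) (hz : z ∈ p.support) (hzB : z ∈ B) :
    ∃ b ∈ B, ∃ (q : G.Walk u b) (r : G.Walk b v), p = q.append r ∧
      ∀ x ∈ q.support, x ∈ B → x = b := by
  classical
  obtain ⟨b, hb, hbp, h⟩ := p.exists_mem_support_forall_mem_support_imp_eq
    {x ∈ p.support.toFinset | x ∈ B} ⟨z, by simp [hz, hzB]⟩
  refine ⟨b, (Finset.mem_filter.1 hb).2, p.takeUntil b hbp, p.dropUntil b hbp,
    (p.take_spec hbp).symm, fun x hx hxB ↦ h x ?_ hx⟩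
  simp [p.support_takeUntil_subset_support hbp hx, hxB]

theorem ne_of_mem_support_tail {p : G.Walk u v} (hp : p.IsPath) (hz : z ∈ p.support.tail) :
    z ≠ u := by
  have h := hp.support_nodup
  rw [← Walk.cons_tail_support, List.nodup_cons] at h
  exact fun hzu ↦ h.1 (hzu ▸ hz)

/-- An `A`–`B` path: its first vertex is its only vertex in `A`, its last one its only vertex in
`B`. It has no edges if these two vertices agree. The two disjoint paths of `Linked` are of this
kind. -/
structure IsPathBetween (A B : Set V) (p : G.Walk u v) : Prop where
  isPath : p.IsPath
  mem_left_iff : ∀ z ∈ p.support, z ∈ A ↔ z = u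
  mem_right_iff : ∀ z ∈ p.support, z ∈ B ↔ z = v

namespace IsPathBetween

variable {p : G.Walk u v}

theorem start_mem (h : IsPathBetween A B p) : u ∈ A :=
  (h.mem_left_iff u p.start_mem_support).2 rfl

theorem end_mem (h : IsPathBetween A B p) : v ∈ B :=
  (h.mem_right_iff v p.end_mem_support).2 rfl

theorem congr_right (h : IsPathBetween A B p) (hD : ∀ z ∈ p.support, z ∈ D ↔ z ∈ B) :
    IsPathBetween A D p :=
  ⟨h.isPath, h.mem_left_iff, fun z hz ↦ (hD z hz).trans (h.mem_right_iff z hz)⟩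

theorem of_subset_left (h : IsPathBetween C B p) (hAC : A ⊆ C) (hu : u ∈ A) :
    IsPathBetween A B p :=
  ⟨h.isPath, fun z hz ↦ ⟨fun hzA ↦ (h.mem_left_iff z hz).1 (hAC hzA), fun hzu ↦ hzu ▸ hu⟩,
    h.mem_right_iff⟩

theorem of_append_left {q : G.Walk v w} (h : IsPathBetween A B (p.append q)) (hDB : D ⊆ B) :
    IsPathBetween A (insert v D) p where
  isPath := h.isPath.of_append_left
  mem_left_iff z hz := h.mem_left_iff z (Walk.support_subset_support_append_left p q hz)
  mem_right_iff z hz := by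
    refine ⟨fun hzD ↦ hzD.elim id fun hzD ↦ ?_, fun hzv ↦ hzv ▸ Set.mem_insert v D⟩
    have hzw := (h.mem_right_iff z (Walk.support_subset_support_append_left p q hz)).1 (hDB hzD)
    exact eq_of_mem_support_append h.isPath hz (hzw ▸ q.end_mem_support)

theorem concat (h : IsPathBetween A (insert v D) p) (hv : v ∉ D) (hvw : G.Adj v w)
    (hwA : w ∉ A) (hwp : w ∉ p.support) : IsPathBetween A (insert w D) (p.concat hvw) where
  isPath := h.isPath.concat hwp hvw
  mem_left_iff z hz := by
    have := h.start_mem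
    have := h.mem_left_iff z
    simp only [Walk.support_concat, List.mem_append, List.mem_singleton] at hz
    grind
  mem_right_iff z hz := by
    have := h.mem_right_iff z
    simp only [Walk.support_concat, List.mem_append, List.mem_singleton] at hz
    grind

end IsPathBetween

/-- No vertex of `G` separates two others: 2-connectedness in terms of walks avoiding a vertex,
without the condition on the number of vertices. -/
def NoCutVertex (G : SimpleGraph V) : Prop :=
  ∀ ⦃z u v : V⦄, u ≠ z → v ≠ z → ∃ p : G.Walk u v, z ∉ p.support

theorem NoCutVertex.exists_isPathBetween (hG : NoCutVertex G) (hc : c ∈ C) (hd : d ∈ D)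
    (hcz : c ≠ z) (hdz : d ≠ z) :
    ∃ (s t : V) (p : G.Walk s t), IsPathBetween C D p ∧ z ∉ p.support := by
  classical
  obtain ⟨p, hzp⟩ := hG hcz hdz
  obtain ⟨t, htD, q, r, hqr, hq⟩ := exists_append_first_mem p.bypass (Walk.end_mem_support _) hd
  obtain ⟨s, hsC, q', r', hqr', hq'⟩ :=
    exists_append_first_mem q.reverse (Walk.end_mem_support _) hc
  have hsub : q'.support ⊆ q.support := fun x hx ↦ by
    simpa [← hqr'] using Walk.support_subset_support_append_left q' r' hx
  have hqpath : q.IsPath := (hqr ▸ p.bypass_isPath : (q.append r).IsPath).of_append_left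
  refine ⟨s, t, q'.reverse, ⟨?_, fun x hx ↦ ?_, fun x hx ↦ ?_⟩, fun hz ↦ hzp ?_⟩
  · exact (hqr' ▸ hqpath.reverse : (q'.append r').IsPath).of_append_left.reverse
  · exact ⟨hq' x (by simpa using hx), fun h ↦ h ▸ hsC⟩
  · exact ⟨hq x (hsub (by simpa using hx)), fun h ↦ h ▸ htD⟩
  · refine p.support_bypass_subset_support ?_
    exact hqr ▸ Walk.support_subset_support_append_left q r (hsub (by simpa using hz))

/-- There are two disjoint `A`–`B` paths with `a` among their first and `b` among their last
vertices. With `B` enlarged by the current vertex `b` of a walk, this is the invariant of the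
augmentation along that walk. -/
def Linked (G : SimpleGraph V) (A B : Set V) (a b : V) : Prop :=
  ∃ (p q d : V) (X : G.Walk p b) (Y : G.Walk q d), IsPathBetween A B X ∧ IsPathBetween A B Y ∧
    X.support.Disjoint Y.support ∧ (a = p ∨ a = q)

theorem IsPathBetween.reroute {F : G.Walk u w} {T : G.Walk c d}
    (hF : IsPathBetween A (insert w B) F) (hT : IsPathBetween C B T) (hAC : A ⊆ C)
    (hFC : ∀ z ∈ F.support, z ∈ C) (hwT : w ∉ T.support) (hcF : c ∈ F.support) :
    ∃ Y : G.Walk u d, IsPathBetween A (insert w B) Y ∧ w ∉ Y.support ∧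
      ∀ z ∈ Y.support, z ∈ F.support ∨ z ∈ T.support := by
  obtain ⟨F₁, F₂, rfl⟩ := Walk.mem_support_iff_exists_append.1 hcF
  have hF₁ : IsPathBetween A (insert c B) F₁ := hF.of_append_left (Set.subset_insert w B)
  have hsub : ∀ z ∈ F₁.support, z ∈ (F₁.append F₂).support :=
    Walk.support_subset_support_append_left F₁ F₂
  have hcT := T.start_mem_support
  have hwF₁ : w ∉ F₁.support := fun hw ↦
    hwT (eq_of_mem_support_append hF.isPath hw F₂.end_mem_support ▸ hcT)
  have hmeet : ∀ z ∈ F₁.support, z ∈ T.support → z = c := fun z hz hzT ↦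
    (hT.mem_left_iff z hzT).1 (hFC z (hsub z hz))
  refine ⟨F₁.append T, ⟨isPath_append hF₁.isPath hT.isPath hmeet, fun z hz ↦ ?_,
    fun z hz ↦ ?_⟩, ?_, fun z hz ↦ ?_⟩
  · rw [Walk.mem_support_append_iff] at hz
    have := hF₁.start_mem
    have := hF₁.mem_left_iff z
    have := hF.mem_left_iff c hcF
    have := hT.mem_left_iff z
    grind
  · rw [Walk.mem_support_append_iff] at hz
    have := hT.end_mem
    have := hF₁.mem_right_iff z
    have := hT.mem_right_iff z
    grind
  · simp [hwF₁, hwT]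
  · exact ((Walk.mem_support_append_iff _ _).1 hz).imp_left (hsub z)

theorem linked_of_isPathBetween_isPathBetween (hG : NoCutVertex G) {F₁ : G.Walk a w}
    {F₂ : G.Walk u w} (hF₁ : IsPathBetween A (insert w B) F₁)
    (hF₂ : IsPathBetween A (insert w B) F₂) (hwA : w ∉ A) (hwB : w ∉ B) (hB : B.Nonempty)
    (hF : ∀ z ∈ F₁.support, z ∈ F₂.support → z = w) : Linked G A (insert w B) a w := by
  obtain ⟨b, hb⟩ := hB
  have haw : a ≠ w := fun h ↦ hwA (h ▸ hF₁.start_mem)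
  have hbw : b ≠ w := fun h ↦ hwB (h ▸ hb)
  set C := {z | z ∈ A ∨ z ∈ F₁.support ∨ z ∈ F₂.support}
  have hAC : A ⊆ C := fun z ↦ Or.inl
  obtain ⟨c, d, T, hT, hwT⟩ := hG.exists_isPathBetween (C := C) (Or.inl hF₁.start_mem) hb haw hbw
  have hcC : ∀ z ∈ C, z ∈ T.support → z = c := fun z hz hzT ↦ (hT.mem_left_iff z hzT).1 hz
  by_cases hc₁ : c ∈ F₁.support
  · obtain ⟨Y, hY, hwY, hYsub⟩ := hF₁.reroute hT hAC (fun z hz ↦ .inr (.inl hz)) hwT hc₁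
    refine ⟨u, a, d, F₂, Y, hF₂, hY, fun z hz hzY ↦ ?_, .inr rfl⟩
    have := hcC z (.inr (.inr hz))
    grind
  by_cases hc₂ : c ∈ F₂.support
  · obtain ⟨Y, hY, hwY, hYsub⟩ := hF₂.reroute hT hAC (fun z hz ↦ .inr (.inr hz)) hwT hc₂
    refine ⟨a, u, d, F₁, Y, hF₁, hY, fun z hz hzY ↦ ?_, .inl rfl⟩
    have := hcC z (.inr (.inl hz))
    grind
  · have hcA : c ∈ A := by
      obtain h | h | h : c ∈ C := hT.start_mem
      exacts [h, absurd h hc₁, absurd h hc₂]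
    refine ⟨a, c, d, F₁, T, hF₁, (hT.of_subset_left hAC hcA).congr_right fun z hz ↦ ?_,
      fun z hz hzT ↦ hc₁ (hcC z (.inr (.inl hz)) hzT ▸ hz), .inl rfl⟩
    grind

-- One augmentation step of Menger's theorem: if the new vertex already lies on the other path, the
-- two paths meet there, and a third path avoiding that vertex separates them again.
theorem Linked.of_adj (hG : NoCutVertex G) (hB : B.Nonempty) (h : Linked G A (insert w B) a w)
    (hw : w ∉ B) (hwA : w' ∉ A) (hwB : w' ∉ B) (hww : G.Adj w w') :
    Linked G A (insert w' B) a w' := by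
  obtain ⟨p, q, d, X, Y, hX, hY, hXY, ha⟩ := h
  have hBw : B ⊆ insert w B := Set.subset_insert w B
  have hwY : w ∉ Y.support := hXY X.end_mem_support
  by_cases hwX' : w' ∈ X.support
  · obtain ⟨X₁, X₂, rfl⟩ := Walk.mem_support_iff_exists_append.1 hwX'
    refine ⟨p, q, d, X₁, Y, hX.of_append_left hBw, hY.congr_right fun z hz ↦ ?_,
      fun z hz ↦ hXY (Walk.support_subset_support_append_left _ _ hz), ha⟩
    have := hXY hwX'
    grind
  have hX' := hX.concat hw hww hwA hwX'
  have hXsupp : ∀ z, z ∈ (X.concat hww).support ↔ z ∈ X.support ∨ z = w' := by simp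
  by_cases hwY' : w' ∈ Y.support
  · obtain ⟨Y₁, Y₂, rfl⟩ := Walk.mem_support_iff_exists_append.1 hwY'
    have hY₁ := hY.of_append_left hBw
    have hmeet : ∀ z ∈ (X.concat hww).support, z ∈ Y₁.support → z = w' := fun z hz hzY ↦
      ((hXsupp z).1 hz).resolve_left fun hzX ↦
        hXY hzX (Walk.support_subset_support_append_left _ _ hzY)
    rcases ha with rfl | rfl
    · exact linked_of_isPathBetween_isPathBetween hG hX' hY₁ hwA hwB hB hmeet
    · exact linked_of_isPathBetween_isPathBetween hG hY₁ hX' hwA hwB hB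
        fun z hz hzX ↦ hmeet z hzX hz
  · refine ⟨p, q, d, X.concat hww, Y, hX', hY.congr_right fun z hz ↦ ?_, fun z hz hzY ↦ ?_, ha⟩
    · grind
    · have := @hXY z
      grind

theorem linked_insert_self (hG : NoCutVertex G) (ha : a ∈ A) (haB : a ∉ B) (hB : B.Nonempty)
    (hA : ∃ a' ∈ A, a' ≠ a) : Linked G A (insert a B) a a := by
  obtain ⟨b, hb⟩ := hB
  obtain ⟨a', ha', hne⟩ := hA
  obtain ⟨q, d, Y, hY, haY⟩ :=
    hG.exists_isPathBetween ha' hb hne (show b ≠ a from fun h ↦ haB (h ▸ hb))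
  refine ⟨a, q, d, .nil, Y, ⟨.nil, ?_, ?_⟩, hY.congr_right fun z hz ↦ ?_, ?_, .inl rfl⟩
  · simpa using ha
  · simp
  · grind
  · simpa using haY

theorem Linked.of_walk (hG : NoCutVertex G) (hB : B.Nonempty) (P : G.Walk u w)
    (h : Linked G A (insert u B) a u) (hPA : ∀ z ∈ P.support.tail, z ∉ A)
    (hPB : ∀ z ∈ P.support, z ∉ B) : Linked G A (insert w B) a w := by
  induction P with
  | nil => exact h
  | cons huv P ih =>
    simp only [Walk.support_cons, List.tail_cons, List.forall_mem_cons] at hPA hPB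
    have hv := P.start_mem_support
    exact ih (h.of_adj hG hB hPB.1 (hPA _ hv) (hPB.2 _ hv) huv)
      (fun z hz ↦ hPA z (List.mem_of_mem_tail hz)) hPB.2

theorem IsPathBetween.linked (hG : NoCutVertex G) {M : G.Walk a b} (hM : IsPathBetween A B M)
    (hA : ∃ a' ∈ A, a' ≠ a) (hB : ∃ b' ∈ B, b' ≠ b) (hab : a ∉ B \ {b}) : Linked G A B a b := by
  rw [← Set.insert_sdiff_self_of_mem hM.end_mem]
  have hB' : (B \ {b}).Nonempty := hB.imp fun _ ↦ id
  refine Linked.of_walk hG hB' M (linked_insert_self hG hM.start_mem hab hB' hA) ?_ ?_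
  · exact fun z hz hzA ↦ ne_of_mem_support_tail hM.isPath hz
      ((hM.mem_left_iff z (List.mem_of_mem_tail hz)).1 hzA)
  · exact fun z hz hzB ↦ hzB.2 ((hM.mem_right_iff z hz).1 hzB.1)

-- Walk back from `u` to `x`, then jump to the first neighbour of `x` beyond `u`.
theorem exists_isPath_of_adj_end {L : G.Walk x s} (hL : L.IsPath) (hxs : G.Adj x s)
    (hu : u ∈ L.support) (hus : u ≠ s) :
    ∃ L' : G.Walk u s, L'.IsPath ∧ L'.support ⊆ L.support ∧
      ∀ z ∈ L.support, z = x ∨ G.Adj x z → z ∈ L'.support := by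
  obtain ⟨L₁, L₂, rfl⟩ := Walk.mem_support_iff_exists_append.1 hu
  obtain ⟨z, ⟨hxz, hzu⟩, Q, R, rfl, hQ⟩ := exists_append_first_mem (B := {z | G.Adj x z ∧ z ≠ u})
    L₂ L₂.end_mem_support ⟨hxs, hus.symm⟩
  have hQR := hL.of_append_right
  have huR : u ∉ R.support := fun h ↦ hzu (eq_of_mem_support_append hQR Q.start_mem_support h).symm
  have hdisj : ∀ t ∈ L₁.support, t ∉ R.support := fun t ht htR ↦ by
    have := eq_of_mem_support_append hL ht (Walk.support_subset_support_append_right Q R htR)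
    exact huR (this ▸ htR)
  have hxL₁ := L₁.start_mem_support
  have hsupp : ∀ t, t ∈ (L₁.reverse.append (R.cons hxz)).support ↔
      t ∈ L₁.support ∨ t ∈ R.support := by
    intro t
    simp only [Walk.mem_support_append_iff, Walk.support_reverse, List.mem_reverse,
      Walk.support_cons, List.mem_cons]
    grind
  refine ⟨L₁.reverse.append (R.cons hxz), isPath_append hL.of_append_left.reverse
    (hQR.of_append_right.cons (hdisj x hxL₁)) fun t ht htR ↦ ?_, fun t ht ↦ ?_, fun t ht htx ↦ ?_⟩
  · rw [Walk.support_reverse, List.mem_reverse] at ht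
    exact (List.mem_cons.1 htR).resolve_right (hdisj t ht)
  · simp only [Walk.mem_support_append_iff]
    exact ((hsupp t).1 ht).imp_right .inr
  · simp only [Walk.mem_support_append_iff] at ht
    rw [hsupp]
    rcases htx with rfl | htx
    · exact .inl hxL₁
    rcases ht with ht | ht | ht
    · exact .inl ht
    · by_cases htu : t = u
      · exact .inl (htu ▸ L₁.end_mem_support)
      · exact .inr (hQ t ht ⟨htx, htu⟩ ▸ R.start_mem_support)
    · exact .inr ht

theorem isCycle_append_of_isPathBetween {p q : V} {X : G.Walk p t} {Y : G.Walk q d}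
    {L : G.Walk q p} {R : G.Walk t d} (hX : IsPathBetween A B X) (hY : IsPathBetween A B Y)
    (hXY : X.support.Disjoint Y.support) (hL : L.IsPath) (hR : R.IsPath)
    (hLA : ∀ z ∈ L.support, z ∈ A) (hRB : ∀ z ∈ R.support, z ∈ B)
    (hAB : ∀ z ∈ A, z ∈ B → z ∈ X.support) :
    ((L.append (X.append R)).append Y.reverse).IsCycle := by
  have hpath : (L.append (X.append R)).IsPath := by
    refine isPath_append hL (isPath_append hX.isPath hR fun z hz hzR ↦ ?_) fun z hz hzXR ↦ ?_
    · exact (hX.mem_right_iff z hz).1 (hRB z hzR)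
    · have hzX : z ∈ X.support := ((Walk.mem_support_append_iff _ _).1 hzXR).elim id fun hzR ↦
        hAB z (hLA z hz) (hRB z hzR)
      exact (hX.mem_left_iff z hzX).1 (hLA z hz)
  refine hpath.isCycle_append hY.isPath.reverse (fun z hz hzY ↦ ?_) (.inl ?_)
  · have hzq := ne_of_mem_support_tail hpath hz
    have hzd := ne_of_mem_support_tail hY.isPath.reverse hzY
    have hzY : z ∈ Y.support := by simpa using List.mem_of_mem_tail hzY
    have hz := List.mem_of_mem_tail hz
    simp only [Walk.mem_support_append_iff] at hz
    rcases hz with hzL | hzX | hzR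
    · exact hzq ((hY.mem_left_iff z hzY).1 (hLA z hzL))
    · exact hXY hzX hzY
    · exact hzd ((hY.mem_right_iff z hzY).1 (hRB z hzR))
  · have hqp : 0 < L.length := Nat.pos_of_ne_zero fun h ↦
      hXY X.start_mem_support (Walk.eq_of_length_eq_zero h ▸ Y.start_mem_support)
    have htd : 0 < R.length := Nat.pos_of_ne_zero fun h ↦
      hXY X.end_mem_support ((Walk.eq_of_length_eq_zero h).symm ▸ Y.end_mem_support)
    simp only [Walk.length_append]
    omega

theorem exists_isCycle_of_neighbors_mem_ends (hG : NoCutVertex G) {L : G.Walk x s}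
    {M : G.Walk s t} {R : G.Walk t y} (hP : (L.append (M.append R)).IsPath) (hxs : G.Adj x s)
    (hyt : G.Adj y t) : ∃ (v : V) (c : G.Walk v v), c.IsCycle ∧
      (∀ z ∈ L.support, z = x ∨ G.Adj x z → z ∈ c.support) ∧
      ∀ z ∈ R.support, z = y ∨ G.Adj y z → z ∈ c.support := by
  have hMR := hP.of_append_right
  have hLMR : ∀ z ∈ L.support, z ∈ M.support ∨ z ∈ R.support → z = s := fun z hz hz' ↦
    eq_of_mem_support_append hP hz ((Walk.mem_support_append_iff _ _).2 hz')
  have hM : IsPathBetween {z | z ∈ L.support} {z | z ∈ R.support} M :=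
    ⟨hMR.of_append_left,
      fun z hz ↦ ⟨fun hzL ↦ hLMR z hzL (.inl hz), fun h ↦ h ▸ L.end_mem_support⟩,
      fun z hz ↦ ⟨eq_of_mem_support_append hMR hz, fun h ↦ h ▸ R.start_mem_support⟩⟩
  obtain ⟨p, q, d, X, Y, hX, hY, hXY, hs⟩ := hM.linked hG ⟨x, L.start_mem_support, hxs.ne⟩
    ⟨y, R.end_mem_support, hyt.ne⟩ fun h ↦ h.2 ((hM.mem_right_iff s M.start_mem_support).1 h.1)
  have hpq : p ≠ q := fun h ↦ hXY X.start_mem_support (h ▸ Y.start_mem_support)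
  have htd : d ≠ t := fun h ↦ hXY X.end_mem_support (h ▸ Y.end_mem_support)
  obtain ⟨L', hL', hL'L, hxL'⟩ : ∃ L' : G.Walk q p, L'.IsPath ∧ L'.support ⊆ L.support ∧
      ∀ z ∈ L.support, z = x ∨ G.Adj x z → z ∈ L'.support := by
    have hL := hP.of_append_left
    rcases hs with rfl | rfl
    · exact exists_isPath_of_adj_end hL hxs hY.start_mem hpq.symm
    · obtain ⟨L', hL', hsub, hx⟩ := exists_isPath_of_adj_end hL hxs hX.start_mem hpq
      exact ⟨L'.reverse, hL'.reverse, by simpa using hsub, by simpa using hx⟩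
  obtain ⟨R', hR', hR'R, hyR'⟩ := exists_isPath_of_adj_end hMR.of_append_right.reverse hyt
    (by simpa using hY.end_mem) htd
  have hLR : ∀ z ∈ L.support, z ∈ R.support → z ∈ X.support := fun z hzL hzR ↦ by
    obtain rfl := hLMR z hzL (.inr hzR)
    obtain rfl := (hM.mem_right_iff _ M.start_mem_support).1 hzR
    exact X.end_mem_support
  refine ⟨q, _, isCycle_append_of_isPathBetween hX hY hXY hL' hR'.reverse (fun z hz ↦ hL'L hz)
    (fun z hz ↦ by simpa using hR'R (by simpa using hz)) hLR, ?_, ?_⟩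
  · grind [Walk.mem_support_append_iff]
  · simp only [Walk.support_reverse, List.mem_reverse] at hyR'
    grind [Walk.mem_support_append_iff, Walk.support_reverse]

theorem card_le_length_of_not_nil {c : G.Walk v v} (hc : ¬c.Nil) {S : Finset V}
    (hS : ∀ z ∈ S, z ∈ c.support) : S.card ≤ c.length := by
  classical
  have hsub : S ⊆ c.support.tail.toFinset := fun z hz ↦ List.mem_toFinset.2 <| by
    rcases c.mem_support_iff.1 (hS z hz) with rfl | hz
    exacts [Walk.end_mem_tail_support hc, hz]
  calc S.card ≤ c.support.tail.toFinset.card := Finset.card_le_card hsub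
    _ ≤ c.support.tail.length := List.toFinset_card_le _
    _ = c.length := by simp

theorem degree_add_degree_lt_length [Fintype (G.neighborSet x)]
    [Fintype (G.neighborSet y)] {c : G.Walk v v} (hc : ¬c.Nil)
    (hx : ∀ z, z = x ∨ G.Adj x z → z ∈ c.support) (hy : ∀ z, z = y ∨ G.Adj y z → z ∈ c.support)
    (hxy : ∀ z, (z = x ∨ G.Adj x z) → (z = y ∨ G.Adj y z) → z = s) :
    G.degree x + G.degree y < c.length := by
  classical
  set N := insert x (G.neighborFinset x)
  set N' := insert y (G.neighborFinset y)
  have hN : ∀ z, z ∈ N ↔ z = x ∨ G.Adj x z := by simp [N]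
  have hN' : ∀ z, z ∈ N' ↔ z = y ∨ G.Adj y z := by simp [N']
  have hinter : (N ∩ N').card ≤ 1 := by
    rw [← Finset.card_singleton s]
    refine Finset.card_le_card fun z hz ↦ ?_
    rw [Finset.mem_inter, hN, hN'] at hz
    exact Finset.mem_singleton.2 (hxy z hz.1 hz.2)
  have hunion : (N ∪ N').card ≤ c.length := card_le_length_of_not_nil hc fun z hz ↦ by
    rw [Finset.mem_union, hN, hN'] at hz
    exact hz.elim (hx z) (hy z)
  have hcard : N.card = G.degree x + 1 := by simp [N]
  have hcard' : N'.card = G.degree y + 1 := by simp [N']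
  have := Finset.card_union_add_card_inter N N'
  omega

theorem exists_getVert_succ_eq (p : G.Walk u v) (hz : z ∈ p.support) (hzu : z ≠ u) :
    ∃ i < p.length, p.getVert (i + 1) = z := by
  obtain ⟨i, rfl, hi⟩ := Walk.mem_support_iff_exists_getVert.1 hz
  cases i with
  | zero => exact absurd p.getVert_zero hzu
  | succ i => exact ⟨i, hi, rfl⟩

theorem exists_getVert_eq (p : G.Walk u v) (hz : z ∈ p.support) (hzv : z ≠ v) :
    ∃ i < p.length, p.getVert i = z := by
  obtain ⟨i, rfl, hi⟩ := Walk.mem_support_iff_exists_getVert.1 hz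
  exact ⟨i, hi.lt_of_ne fun h ↦ hzv (h ▸ p.getVert_length), rfl⟩

theorem degree_le_card_filter [Fintype (G.neighborSet x)] [DecidablePred (G.Adj x)] {k : ℕ}
    {f : ℕ → V} (h : ∀ z, G.Adj x z → ∃ i < k, f i = z) :
    G.degree x ≤ ({i ∈ Finset.range k | G.Adj x (f i)} : Finset ℕ).card := by
  classical
  rw [← G.card_neighborFinset_eq_degree x]
  refine (Finset.card_le_card fun z hz ↦ ?_).trans (Finset.card_image_le (f := f))
  have hxz := (G.mem_neighborFinset x z).1 hz
  obtain ⟨i, hi, rfl⟩ := h z hxz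
  exact Finset.mem_image_of_mem f (by simp [hi, hxz])

theorem exists_le_min_card_add_card_le {I J : Finset ℕ} {k : ℕ} (hI : I ⊆ Finset.range k)
    (hJ : J ⊆ Finset.range k) (h : ∃ j ∈ J, ∃ i ∈ I, j ≤ i) :
    ∃ j ∈ J, ∃ i ∈ I, j ≤ i ∧ min (k + 1) (I.card + J.card) ≤ (j + 1) + (k - i) := by
  obtain ⟨j₀, hj₀, i₀, hi₀, hji₀⟩ := h
  -- A pair at minimal distance has no element of `I ∪ J` strictly inside, and if `j < i` then
  -- `I` and `J` are disjoint.
  obtain ⟨⟨i, j⟩, hij, hmin⟩ := ((I ×ˢ J).filter fun e ↦ e.2 ≤ e.1).exists_min_image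
    (fun e ↦ e.1 - e.2) ⟨(i₀, j₀), by simp [*]⟩
  simp only [Finset.mem_filter, Finset.mem_product, Prod.forall, and_imp] at hij hmin
  obtain ⟨⟨hi, hj⟩, hji⟩ := hij
  refine ⟨j, hj, i, hi, hji, ?_⟩
  have hik := Finset.mem_range.1 (hI hi)
  rcases hji.eq_or_lt with rfl | hlt
  · omega
  have hdisj : Disjoint I J := Finset.disjoint_left.2 fun m hmI hmJ ↦ by
    have := hmin m m hmI hmJ le_rfl
    omega
  have hsub : I ∪ J ⊆ Finset.range (j + 1) ∪ Finset.Ico i k := fun m hm ↦ by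
    simp only [Finset.mem_union, Finset.mem_range, Finset.mem_Ico] at hm ⊢
    rcases hm with hm | hm
    · have := hmin m j hm hj
      have := Finset.mem_range.1 (hI hm)
      omega
    · have := hmin i m hi hm
      have := Finset.mem_range.1 (hJ hm)
      omega
  calc min (k + 1) (I.card + J.card) ≤ (I ∪ J).card := by
        rw [Finset.card_union_of_disjoint hdisj]
        exact min_le_right _ _
    _ ≤ _ := Finset.card_le_card hsub
    _ ≤ (j + 1) + (k - i) := (Finset.card_union_le _ _).trans_eq (by simp)

theorem exists_isCycle_of_crossing {P : G.Walk x y} (hP : P.IsPath) {i j : ℕ} (hji : j ≤ i)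
    (hi : i < P.length) (hlen : 2 ≤ j + (P.length - i)) (hx : G.Adj x (P.getVert (i + 1)))
    (hy : G.Adj y (P.getVert j)) :
    ∃ (v : V) (c : G.Walk v v), c.IsCycle ∧ c.length = (j + 1) + (P.length - i) := by
  have hdisj : ∀ z ∈ (P.take j).support, z ∉ (P.drop (i + 1)).support := fun z hz hz' ↦ by
    obtain ⟨m, rfl, hm⟩ := Walk.mem_support_iff_exists_getVert.1 hz
    obtain ⟨l, hl, hl'⟩ := Walk.mem_support_iff_exists_getVert.1 hz'
    simp only [Walk.take_getVert, Walk.drop_getVert, Walk.take_length, Walk.drop_length] at *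
    have := hP.getVert_injOn (show i + 1 + l ≤ P.length by omega)
      (show j ⊓ m ≤ P.length by omega) hl
    omega
  have hx' : x ∉ (P.drop (i + 1)).support := hdisj x (P.take j).start_mem_support
  have hQ : ((P.take j).reverse.append ((P.drop (i + 1)).cons hx)).IsPath :=
    isPath_append (hP.take j).reverse ((hP.drop (i + 1)).cons hx') fun z hz hz' ↦
      (List.mem_cons.1 hz').resolve_right (hdisj z (by simpa using hz))
  have hQlen : ((P.take j).reverse.append ((P.drop (i + 1)).cons hx)).length =
      j + (P.length - i) := by
    simp only [Walk.length_append, Walk.length_reverse, Walk.take_length, Walk.length_cons,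
      Walk.drop_length]
    omega
  refine ⟨_, _, isCycle_cons_of_two_le_length hQ hy (by omega), ?_⟩
  rw [Walk.length_cons]
  omega

theorem exists_isCycle_of_adj_getVert_le (hG : NoCutVertex G) [Fintype (G.neighborSet x)]
    [Fintype (G.neighborSet y)] {P : G.Walk x y} (hP : P.IsPath) {i j : ℕ} (hij : i ≤ j)
    (hx : G.Adj x (P.getVert i)) (hy : G.Adj y (P.getVert j))
    (hx' : ∀ z, G.Adj x z → ∃ m ≤ i, P.getVert m = z)
    (hy' : ∀ z, G.Adj y z → ∃ m ≤ P.length, j ≤ m ∧ P.getVert m = z) :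
    ∃ (v : V) (c : G.Walk v v), c.IsCycle ∧ G.degree x + G.degree y < c.length := by
  have hdrop : ∀ m, j ≤ m → ((P.drop i).drop (j - i)).getVert (m - j) = P.getVert m :=
    fun m hm ↦ by
      rw [Walk.drop_getVert, Walk.drop_getVert]
      congr 1
      omega
  have hsplit : ((P.take i).append (((P.drop i).take (j - i)).append
      ((P.drop i).drop (j - i)))).IsPath := by
    rwa [Walk.append_take_drop_eq, Walk.append_take_drop_eq]
  have hy'' : G.Adj y ((P.drop i).getVert (j - i)) := by
    rwa [Walk.drop_getVert, Nat.add_sub_cancel' hij]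
  obtain ⟨v, c, hc, hxc, hyc⟩ := exists_isCycle_of_neighbors_mem_ends hG hsplit hx hy''
  have hxL : ∀ z, z = x ∨ G.Adj x z → z ∈ (P.take i).support := by
    rintro z (rfl | hz)
    · exact Walk.start_mem_support _
    · obtain ⟨m, hm, rfl⟩ := hx' z hz
      simpa [hm] using (P.take i).getVert_mem_support m
  have hyR : ∀ z, z = y ∨ G.Adj y z → z ∈ ((P.drop i).drop (j - i)).support := by
    rintro z (rfl | hz)
    · exact Walk.end_mem_support _
    · obtain ⟨m, -, hm, rfl⟩ := hy' z hz
      exact hdrop m hm ▸ Walk.getVert_mem_support _ _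
  exact ⟨v, c, hc, degree_add_degree_lt_length hc.not_nil (fun z hz ↦ hxc z (hxL z hz) hz)
    (fun z hz ↦ hyc z (hyR z hz) hz) fun z hz hz' ↦ eq_of_mem_support_append hsplit (hxL z hz)
      (Walk.support_subset_support_append_right _ _ (hyR z hz'))⟩

theorem exists_isCycle_of_not_crossing (hG : NoCutVertex G) [Fintype (G.neighborSet x)]
    [Fintype (G.neighborSet y)] {P : G.Walk x y} (hP : P.IsPath) (hnil : ¬P.Nil)
    (hx : ∀ z, G.Adj x z → z ∈ P.support) (hy : ∀ z, G.Adj y z → z ∈ P.support)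
    (hcross : ∀ i ≤ P.length, ∀ j ≤ P.length, G.Adj x (P.getVert i) → G.Adj y (P.getVert j) →
      i ≤ j) :
    ∃ (v : V) (c : G.Walk v v), c.IsCycle ∧ G.degree x + G.degree y < c.length := by
  classical
  have hlen := Walk.not_nil_iff_lt_length.1 hnil
  have hyj : ∃ j ≤ P.length, G.Adj y (P.getVert j) :=
    ⟨P.length - 1, by omega, (P.adj_penultimate hnil).symm⟩
  have hxi := Nat.findGreatest_spec (P := fun m ↦ G.Adj x (P.getVert m)) hlen (P.adj_snd hnil)
  obtain ⟨hj, hyj'⟩ := Nat.find_spec hyj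
  refine exists_isCycle_of_adj_getVert_le hG hP
    (hcross _ (Nat.findGreatest_le _) _ hj hxi hyj') hxi hyj' (fun z hz ↦ ?_) fun z hz ↦ ?_
  · obtain ⟨m, rfl, hm⟩ := Walk.mem_support_iff_exists_getVert.1 (hx z hz)
    exact ⟨m, Nat.le_findGreatest hm hz, rfl⟩
  · obtain ⟨m, rfl, hm⟩ := Walk.mem_support_iff_exists_getVert.1 (hy z hz)
    exact ⟨m, hm, Nat.find_min' hyj ⟨hm, hz⟩, rfl⟩

theorem exists_isCycle_of_not_adj (hG : NoCutVertex G) [Fintype (G.neighborSet x)]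
    [Fintype (G.neighborSet y)] {P : G.Walk x y} (hP : P.IsPath) (hxy : x ≠ y)
    (hadj : ¬G.Adj x y) (hx : ∀ z, G.Adj x z → z ∈ P.support)
    (hy : ∀ z, G.Adj y z → z ∈ P.support) :
    ∃ (v : V) (c : G.Walk v v),
      c.IsCycle ∧ min (P.length + 1) (G.degree x + G.degree y) ≤ c.length := by
  classical
  have hx' z (hz : G.Adj x z) := exists_getVert_succ_eq P (hx z hz) hz.ne'
  have hy' z (hz : G.Adj y z) := exists_getVert_eq P (hy z hz) hz.ne'
  set I : Finset ℕ := {i ∈ Finset.range P.length | G.Adj x (P.getVert (i + 1))}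
  set J : Finset ℕ := {j ∈ Finset.range P.length | G.Adj y (P.getVert j)}
  have hI : ∀ i, i ∈ I ↔ i < P.length ∧ G.Adj x (P.getVert (i + 1)) := by simp [I]
  have hJ : ∀ j, j ∈ J ↔ j < P.length ∧ G.Adj y (P.getVert j) := by simp [J]
  by_cases hcross : ∃ j ∈ J, ∃ i ∈ I, j ≤ i
  · obtain ⟨j, hj, i, hi, hji, hle⟩ := exists_le_min_card_add_card_le
      (Finset.filter_subset _ _) (Finset.filter_subset _ _) hcross
    obtain ⟨-, hyj⟩ := (hJ j).1 hj
    obtain ⟨hik, hxi⟩ := (hI i).1 hi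
    have hj0 : j ≠ 0 := by
      rintro rfl
      exact hadj (P.getVert_zero ▸ hyj).symm
    obtain ⟨v, c, hc, hlen⟩ := exists_isCycle_of_crossing hP hji hik (by omega) hxi hyj
    refine ⟨v, c, hc, hlen ▸ le_trans ?_ hle⟩
    exact min_le_min_left _ (add_le_add (degree_le_card_filter hx') (degree_le_card_filter hy'))
  · obtain ⟨v, c, hc, hlen⟩ := exists_isCycle_of_not_crossing hG hP (Walk.not_nil_of_ne hxy) hx hy
      fun i hi j hj hxi hyj ↦ by
        by_contra! hji
        obtain ⟨i, rfl⟩ := Nat.exists_eq_succ_of_ne_zero (Nat.ne_zero_of_lt hji)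
        exact hcross ⟨j, (hJ j).2 ⟨by omega, hyj⟩, i, (hI i).2 ⟨hi, hxi⟩, Nat.le_of_lt_succ hji⟩
    exact ⟨v, c, hc, (min_le_right _ _).trans hlen.le⟩

theorem noCutVertex_of_connected_deleteVerts
    (h : ∀ v : V, ((⊤ : G.Subgraph).deleteVerts {v}).coe.Connected) : NoCutVertex G := by
  intro z u v hu hv
  obtain ⟨p⟩ := (h z).preconnected ⟨u, by simpa using hu⟩ ⟨v, by simpa using hv⟩
  have hp : ∀ w ∈ (p.map (Subgraph.hom _)).support, w ≠ z := by
    simp only [Walk.support_map, List.mem_map]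
    rintro _ ⟨⟨w, hw⟩, -, rfl⟩
    simpa using hw
  exact ⟨p.map (Subgraph.hom _), fun hz ↦ hp z hz rfl⟩

theorem NoCutVertex.preconnected [Fintype V] (hG : NoCutVertex G) (hcard : 3 ≤ Fintype.card V) :
    G.Preconnected := by
  classical
  intro u v
  obtain ⟨z, -, hz⟩ := Finset.exists_mem_notMem_of_card_lt_card
    (s := {u, v}) (t := Finset.univ) (Finset.card_le_two.trans_lt hcard)
  obtain ⟨p, -⟩ := hG (z := z) (u := u) (v := v) (by grind) (by grind)
  exact ⟨p⟩

theorem exists_adj_of_mem_of_notMem (hG : G.Preconnected) {S : Set V} (hu : u ∈ S) (hv : v ∉ S) :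
    ∃ a ∈ S, ∃ b ∉ S, G.Adj a b := by
  obtain ⟨p⟩ := hG u v
  obtain ⟨e, -, he, he'⟩ := p.exists_boundary_dart S hu hv
  exact ⟨e.fst, he, e.snd, he', e.adj⟩

theorem two_le_length_of_forall_adj_mem_support [Fintype V] (hG : G.Preconnected)
    (hcard : 3 ≤ Fintype.card V) {P : G.Walk x y} (hx : ∀ z, G.Adj x z → z ∈ P.support)
    (hy : ∀ z, G.Adj y z → z ∈ P.support) : 2 ≤ P.length := by
  classical
  by_contra! hlen
  obtain ⟨w, -, hw⟩ : ∃ w ∈ Finset.univ, w ∉ P.support.toFinset :=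
    Finset.exists_mem_notMem_of_card_lt_card <| by
      have := P.support.toFinset_card_le
      rw [Walk.length_support] at this
      rw [Finset.card_univ]
      omega
  obtain ⟨a, ha, b, hb, hab⟩ := exists_adj_of_mem_of_notMem hG (S := {z | z ∈ P.support})
    P.start_mem_support (by simpa using hw)
  by_cases hax : a = x
  · exact hb (hx b (hax ▸ hab))
  by_cases hay : a = y
  · exact hb (hy b (hay ▸ hab))
  obtain ⟨i, hi, rfl⟩ := exists_getVert_eq P ha hay
  exact hax (by rw [show i = 0 by omega, Walk.getVert_zero])

theorem exists_isPath_length_eq_of_isCycle (hG : G.Preconnected) {c : G.Walk v v}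
    (hc : c.IsCycle) (hw : w ∉ c.support) :
    ∃ (s t : V) (p : G.Walk s t), p.IsPath ∧ p.length = c.length := by
  classical
  obtain ⟨a, ha, b, hb, hab⟩ := exists_adj_of_mem_of_notMem hG (S := {z | z ∈ c.support})
    c.start_mem_support hw
  have hc' : (c.rotate a ha).IsCycle := (Walk.isCycle_rotate ha).2 hc
  refine ⟨_, _, (c.rotate a ha).tail.concat hab, hc'.isPath_tail.concat (fun h ↦ hb ?_) hab, ?_⟩
  · rw [Walk.support_tail_of_not_nil _ hc'.not_nil] at h
    exact (c.mem_support_rotate_iff a ha).1 (List.mem_of_mem_tail h)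
  · rw [Walk.length_concat, Walk.length_tail_add_one hc'.not_nil, Walk.length_rotate]

theorem exists_isPath_adj_ends_mem_support (G : SimpleGraph V) [Nonempty V] [Finite G.edgeSet] :
    ∃ (x y : V) (P : G.Walk x y), P.IsPath ∧ (∀ z, G.Adj x z → z ∈ P.support) ∧
      (∀ z, G.Adj y z → z ∈ P.support) ∧
      ∀ (u v : V) (p : G.Walk u v), p.IsPath → p.length ≤ P.length := by
  obtain ⟨x, y, P, hP, hmax⟩ := Walk.exists_isPath_forall_isPath_length_le_length G
  refine ⟨x, y, P, hP, fun z hz ↦ ?_, fun z hz ↦ ?_, hmax⟩ <;> by_contra hzP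
  · have := hmax _ _ _ (hP.cons hzP (h := hz.symm))
    rw [Walk.length_cons] at this
    omega
  · have := hmax _ _ _ (hP.concat hzP hz)
    rw [Walk.length_concat] at this
    omega

end DiracLongCycle

open DiracLongCycle in
theorem dirac_long_cycle_general {V : Type*} [Fintype V] (G : SimpleGraph V) [DecidableRel G.Adj]
    (hcard : 3 ≤ Fintype.card V)
    (h2conn : ∀ v : V, ((⊤ : G.Subgraph).deleteVerts {v}).coe.Connected) (d : ℕ)
    (hdeg : ∀ u v : V, u ≠ v → ¬G.Adj u v → d ≤ G.degree u + G.degree v) :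
    ∃ (v : V) (c : G.Walk v v), c.IsCycle ∧ min (Fintype.card V) d ≤ c.length := by
  have hG := noCutVertex_of_connected_deleteVerts h2conn
  have hconn := hG.preconnected hcard
  have : Nonempty V := Fintype.card_pos_iff.1 (by omega)
  obtain ⟨x, y, P, hP, hx, hy, hmax⟩ := exists_isPath_adj_ends_mem_support G
  have hlen := two_le_length_of_forall_adj_mem_support hconn hcard hx hy
  obtain ⟨v, c, hc, hPc⟩ : ∃ (v : V) (c : G.Walk v v),
      c.IsCycle ∧ min (P.length + 1) d ≤ c.length := by
    by_cases hxy : G.Adj x y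
    · exact ⟨y, _, isCycle_cons_of_two_le_length hP hxy.symm hlen, min_le_left _ _⟩
    · have hne : x ≠ y := fun h ↦ by
        have := SimpleGraph.Walk.length_eq_zero_iff.2 (hP.nil_iff_eq.2 h)
        omega
      obtain ⟨v, c, hc, hle⟩ := exists_isCycle_of_not_adj hG hP hne hxy hx hy
      exact ⟨v, c, hc, (min_le_min_left _ (hdeg x y hne hxy)).trans hle⟩
  refine ⟨v, c, hc, ?_⟩
  by_cases hspan : ∀ w, w ∈ c.support
  · exact (min_le_left _ _).trans (card_le_length_of_not_nil hc.not_nil fun z _ ↦ hspan z)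
  · push Not at hspan
    obtain ⟨w, hw⟩ := hspan
    obtain ⟨s, t, p, hp, hpc⟩ := exists_isPath_length_eq_of_isCycle hconn hc hw
    have := hmax s t p hp
    omega

/-- Dirac's theorem on long cycles: every 2-connected graph `G` on `n` vertices with
minimum degree at least `δ ≥ 2` contains a cycle of length at least `min {n, 2δ}`. -/
theorem dirac_long_cycle {V : Type*} [Fintype V] [DecidableEq V] (G : SimpleGraph V)
    [DecidableRel G.Adj]
    (hcard : 3 ≤ Fintype.card V)
    (h2conn : ∀ v : V, ((⊤ : G.Subgraph).deleteVerts {v}).coe.Connected)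
    (δ : ℕ) (hδ : 2 ≤ δ) (hdeg : ∀ v : V, δ ≤ G.degree v) :
    ∃ (v : V) (c : G.Walk v v), c.IsCycle ∧ min (Fintype.card V) (2 * δ) ≤ c.length := by
  exact dirac_long_cycle_general G hcard h2conn (2 * δ) fun u v _ _ ↦
    (two_mul δ).trans_le (add_le_add (hdeg u) (hdeg v))
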